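/- Let n ≥ 2 and let Γ ⊆ ℝⁿ be a convex invariant cone, and let f be a concave elliptic Hessian operator on Γ satisfying condition N with constants N₁, N₂ > 0. Let Ω ⊂ ℝⁿ be a bounded domain and let u be a smooth admissible function on Ω, continuous up to the boundary, solving F(D²u) = 1 in Ω with u = 0 on ∂Ω, and satisfying condition D with constants D₁, D₂ > 0. Then there exist constants α > 0 and C > 0, depending only on ‖u‖_{C⁰(Ω)}, N₁, N₂, D₁, D₂ and diam(Ω), such that sup_Ω ( (−u)^α |Du| ) ≤ C. -/

import Mathlib

open scoped BigOperators

noncomputable section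

/-- The positive orthant `Γₙ = (0,∞)ⁿ` in `ℝⁿ`. -/
def PosOrthant (n : ℕ) : Set (Fin n → ℝ) := {lam | ∀ i, 0 < lam i}

/-- A convex invariant cone: an open cone `Γ ⊆ ℝⁿ` with vertex at the origin, `Γ ≠ ℝⁿ`,
which is convex, satisfies `Γ + Γₙ ⊆ Γ`, and is invariant under permutations of coordinates. -/
def IsConvexInvariantCone {n : ℕ} (Γ : Set (Fin n → ℝ)) : Prop :=
  IsOpen Γ ∧ Γ ≠ Set.univ ∧ Convex ℝ Γ ∧
    (∀ lam ∈ Γ, ∀ t : ℝ, 0 < t → t • lam ∈ Γ) ∧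
    (∀ lam ∈ Γ, ∀ tau ∈ PosOrthant n, lam + tau ∈ Γ) ∧
    (∀ lam ∈ Γ, ∀ σ : Equiv.Perm (Fin n), lam ∘ σ ∈ Γ)

/-- The partial derivative `∂f/∂λᵢ(λ)`. -/
def fpd {n : ℕ} (f : (Fin n → ℝ) → ℝ) (i : Fin n) (lam : Fin n → ℝ) : ℝ :=
  fderiv ℝ f lam (Pi.single i 1)

/-- A concave elliptic Hessian operator on a convex invariant cone `Γ`:
a `C²`, permutation-invariant, concave function `f` on `Γ` which is elliptic
(`∂f/∂λᵢ > 0`), positive, and positively homogeneous of degree one. -/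
def IsConcaveEllipticHessianOp {n : ℕ} (Γ : Set (Fin n → ℝ)) (f : (Fin n → ℝ) → ℝ) : Prop :=
  ContDiffOn ℝ 2 f Γ ∧ ConcaveOn ℝ Γ f ∧
    (∀ lam ∈ Γ, ∀ σ : Equiv.Perm (Fin n), f (lam ∘ σ) = f lam) ∧
    (∀ lam ∈ Γ, ∀ i, 0 < fpd f i lam) ∧
    (∀ lam ∈ Γ, 0 < f lam) ∧
    (∀ lam ∈ Γ, ∀ t : ℝ, 0 < t → f (t • lam) = t * f lam)

/-- Condition N: whenever `λ ∈ Γ` satisfies `f(λ) = 1` and `Σᵢ ∂f/∂λᵢ(λ) ≤ C` for some `C > 0`,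
then `∂f/∂λᵢ(λ) ≥ 1/(N₁ C^{N₂})` for every `i`. -/
def ConditionN {n : ℕ} (Γ : Set (Fin n → ℝ)) (f : (Fin n → ℝ) → ℝ) (N₁ N₂ : ℝ) : Prop :=
  ∀ lam ∈ Γ, f lam = 1 → ∀ C : ℝ, 0 < C → (∑ i, fpd f i lam) ≤ C →
    ∀ i, 1 / (N₁ * C ^ N₂) ≤ fpd f i lam

/-- The Hessian matrix `D²u(x)`. -/
def hessianMatrix {n : ℕ} (u : EuclideanSpace ℝ (Fin n) → ℝ) (x : EuclideanSpace ℝ (Fin n)) :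
    Matrix (Fin n) (Fin n) ℝ :=
  fun i j => iteratedFDeriv ℝ 2 u x ![EuclideanSpace.single i 1, EuclideanSpace.single j 1]

/-- The vector of eigenvalues `λ(D²u(x))` of the Hessian of `u` at `x`
(junk value `0` if the Hessian matrix fails to be symmetric). -/
def hessEigen {n : ℕ} (u : EuclideanSpace ℝ (Fin n) → ℝ) (x : EuclideanSpace ℝ (Fin n)) :
    Fin n → ℝ :=
  if h : (hessianMatrix u x).IsHermitian then h.eigenvalues else 0

/-- Condition D for a solution `u` of `F(D²u) = 1` on a set `Ω`: at every point, if an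
eigenvalue `λᵢ` of `D²u` exceeds `D₁` then `∂f/∂λᵢ(λ) ⬝ λᵢ ≤ D₂`. -/
def ConditionD {n : ℕ} (f : (Fin n → ℝ) → ℝ) (u : EuclideanSpace ℝ (Fin n) → ℝ)
    (Ω : Set (EuclideanSpace ℝ (Fin n))) (D₁ D₂ : ℝ) : Prop :=
  ∀ x ∈ Ω, ∀ i, D₁ < hessEigen u x i →
    fpd f i (hessEigen u x) * hessEigen u x i ≤ D₂

/-- The `k`-th elementary symmetric polynomial `σ_k` on `ℝⁿ`. -/
def esymmF (n k : ℕ) (lam : Fin n → ℝ) : ℝ :=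
  ∑ s ∈ (Finset.univ : Finset (Fin n)).powersetCard k, ∏ i ∈ s, lam i

/-- The Gårding cone `Γ_k = {λ : σ_j(λ) > 0, j = 1,…,k}`. -/
def GammaK (n k : ℕ) : Set (Fin n → ℝ) :=
  {lam | ∀ j : ℕ, 1 ≤ j → j ≤ k → 0 < esymmF n j lam}

/-- The cone `Γ̂_p` of vectors all of whose sums of `p` distinct coordinates are positive. -/
def GammaHat (n p : ℕ) : Set (Fin n → ℝ) :=
  {lam | ∀ s : Finset (Fin n), s.card = p → 0 < ∑ i ∈ s, lam i}

/-- The `p`-Monge–Ampère operator `M_p(λ) = ∏_{i₁<⋯<i_p} (λ_{i₁} + ⋯ + λ_{i_p})`. -/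
def pMA (n p : ℕ) (lam : Fin n → ℝ) : ℝ :=
  ∏ s ∈ (Finset.univ : Finset (Fin n)).powersetCard p, ∑ i ∈ s, lam i

/-- Quadratic growth: `u(x) ≥ C⁻¹|x|² − C` for some `C > 0`. -/
def QuadraticGrowth {n : ℕ} (u : EuclideanSpace ℝ (Fin n) → ℝ) : Prop :=
  ∃ C : ℝ, 0 < C ∧ ∀ x, C⁻¹ * ‖x‖ ^ 2 - C ≤ u x

/-- `u` is a quadratic polynomial: `u(x) = ½ xᵀAx + b·x + c` with `A` symmetric. -/
def IsQuadraticPolynomial {n : ℕ} (u : EuclideanSpace ℝ (Fin n) → ℝ) : Prop :=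
  ∃ (A : Matrix (Fin n) (Fin n) ℝ) (b : Fin n → ℝ) (c : ℝ), A.IsSymm ∧
    ∀ x, u x = (1 / 2) * (∑ i, ∑ j, A i j * x i * x j) + (∑ i, b i * x i) + c

/-!
Let `p ∈ Ω` and `c < 0`, and let `x` be a maximum point of `(c - u)^α |Du| exp(ε/2 |x - p|²)` over
`{u ≤ c}`, a compact subset of `Ω`. With the direction `ξ` of `Du` frozen at `x`, the function
`log (D_ξ u) + α log (c - u) + ε/2 |x - p|²` has a local maximum at `x`. Apply the linearised
operator `∑ᵢ f_i Dᵢᵢ` in an eigenbasis of `D²u(x)` to it: the third derivatives of `u` drop out,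
because by the concavity and the symmetry of `f` this operator with coefficients frozen at `x`,
applied to `u`, has a minimum at `x`.

If `|Du|² / v` is large, where `v = c - u(x)`, then in every direction where the first order
condition is not dominated by the quadratic weight the eigenvalue is large, so condition D bounds
`f_i`; in the other directions the gradient terms are absorbed by `ε ∑ f_i`. Hence
`∑ f_i ≤ K / v`, and condition N bounds every `f_i` from below. In one of the former directions the
two bounds together give `|Du|² ≤ C v^(1 - N₂)`. Finally let `c → 0`.
-/

open Filter Topology

section Calculus

theorem eq_zero_and_nonpos_of_isLocalMax {g g' : ℝ → ℝ} {g'' t₀ : ℝ}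
    (hg : ∀ᶠ t in 𝓝 t₀, HasDerivAt g (g' t) t) (hg' : HasDerivAt g' g'' t₀)
    (hmax : IsLocalMax g t₀) : g' t₀ = 0 ∧ g'' ≤ 0 := by
  have hfirst : g' t₀ = 0 := hmax.hasDerivAt_eq_zero hg.self_of_nhds
  have hderiv : deriv g =ᶠ[𝓝 t₀] g' := hg.mono fun t ht ↦ ht.deriv
  have hsecond : deriv (deriv g) t₀ = g'' := by rw [hderiv.deriv_eq, hg'.deriv]
  refine ⟨hfirst, not_lt.1 fun hpos ↦ hpos.ne' ?_⟩
  have hmin : IsLocalMin g t₀ := isLocalMin_of_deriv_deriv_pos (hsecond ▸ hpos)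
    (hderiv.self_of_nhds.trans hfirst) hg.self_of_nhds.continuousAt
  have hconst : g =ᶠ[𝓝 t₀] fun _ ↦ g t₀ := by
    filter_upwards [hmin, hmax] with t hle hge using le_antisymm hge hle
  rw [← hsecond, hconst.deriv.deriv_eq]
  simp

variable {E : Type*} [NormedAddCommGroup E] [NormedSpace ℝ E]

theorem hasDerivAt_add_smul (x w : E) (t : ℝ) : HasDerivAt (fun s : ℝ ↦ x + s • w) w t := by
  simpa using ((hasDerivAt_id t).smul_const w).const_add x

theorem tendsto_add_smul_zero (x w : E) : Tendsto (fun t : ℝ ↦ x + t • w) (𝓝 0) (𝓝 x) := by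
  simpa using (hasDerivAt_add_smul x w 0).continuousAt.tendsto

theorem eventually_hasDerivAt_line {g : E → ℝ} {x : E} (hg : ContDiffAt ℝ 2 g x) (w : E) :
    ∀ᶠ t in 𝓝 (0 : ℝ), HasDerivAt (fun s : ℝ ↦ g (x + s • w)) (fderiv ℝ g (x + t • w) w) t := by
  have hnear : ∀ᶠ y in 𝓝 x, ContDiffAt ℝ 2 g y := hg.eventually (by simp)
  filter_upwards [(tendsto_add_smul_zero x w).eventually hnear] with t ht
  exact (ht.differentiableAt (by simp)).hasFDerivAt.comp_hasDerivAt t (hasDerivAt_add_smul x w t)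

theorem hasFDerivAt_fderiv_apply {g : E → ℝ} {x : E} (hg : ContDiffAt ℝ 2 g x) (w : E) :
    HasFDerivAt (fun y ↦ fderiv ℝ g y w) ((fderiv ℝ (fderiv ℝ g) x).flip w) x := by
  have hdiff : DifferentiableAt ℝ (fderiv ℝ g) x :=
    (hg.fderiv_right (m := 1) (by norm_num)).differentiableAt (by simp)
  exact (hdiff.hasFDerivAt.clm_apply (hasFDerivAt_const w x)).congr_fderiv (by ext; simp)

theorem hasDerivAt_fderiv_line {g : E → ℝ} {x : E} (hg : ContDiffAt ℝ 2 g x) (w : E) :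
    HasDerivAt (fun t : ℝ ↦ fderiv ℝ g (x + t • w) w) (fderiv ℝ (fderiv ℝ g) x w w) 0 :=
  (hasFDerivAt_fderiv_apply hg w).hasLineDerivAt w

theorem fderiv_fderiv_nonpos_of_isLocalMax {g : E → ℝ} {x : E} (hg : ContDiffAt ℝ 2 g x)
    (hmax : IsLocalMax g x) (w : E) : fderiv ℝ (fderiv ℝ g) x w w ≤ 0 := by
  refine (eq_zero_and_nonpos_of_isLocalMax (eventually_hasDerivAt_line hg w)
    (hasDerivAt_fderiv_line hg w) ?_).2
  have hline := (tendsto_add_smul_zero x w).eventually hmax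
  simpa [IsLocalMax, IsMaxFilter] using hline

theorem log_add_mul_log_add_conditions_of_isLocalMax {a b q : E → ℝ} {x : E} {α : ℝ}
    (ha : ContDiffAt ℝ 2 a x) (hb : ContDiffAt ℝ 2 b x) (hq : ContDiffAt ℝ 2 q x)
    (ha₀ : a x ≠ 0) (hb₀ : b x ≠ 0)
    (hmax : IsLocalMax (fun y ↦ Real.log (a y) + α * Real.log (b y) + q y) x) (w : E) :
    fderiv ℝ a x w / a x + α * (fderiv ℝ b x w / b x) + fderiv ℝ q x w = 0 ∧
    (fderiv ℝ (fderiv ℝ a) x w w / a x - (fderiv ℝ a x w / a x) ^ 2) +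
      α * (fderiv ℝ (fderiv ℝ b) x w w / b x - (fderiv ℝ b x w / b x) ^ 2) +
      fderiv ℝ (fderiv ℝ q) x w w ≤ 0 := by
  have hline := tendsto_add_smul_zero x w
  have hder : ∀ᶠ t in 𝓝 (0 : ℝ),
      HasDerivAt (fun t ↦ Real.log (a (x + t • w)) + α * Real.log (b (x + t • w)) + q (x + t • w))
        (fderiv ℝ a (x + t • w) w / a (x + t • w) +
          α * (fderiv ℝ b (x + t • w) w / b (x + t • w)) + fderiv ℝ q (x + t • w) w) t := by
    filter_upwards [eventually_hasDerivAt_line ha w, eventually_hasDerivAt_line hb w,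
      eventually_hasDerivAt_line hq w, hline.eventually (ha.continuousAt.eventually_ne ha₀),
      hline.eventually (hb.continuousAt.eventually_ne hb₀)] with t hta htb htq hta₀ htb₀
    exact ((hta.log hta₀).add ((htb.log htb₀).const_mul α)).add htq
  have hder₂ := (((hasDerivAt_fderiv_line ha w).div
      (eventually_hasDerivAt_line ha w).self_of_nhds (by simpa using ha₀)).add
    (((hasDerivAt_fderiv_line hb w).div
      (eventually_hasDerivAt_line hb w).self_of_nhds (by simpa using hb₀)).const_mul α)).add
    (hasDerivAt_fderiv_line hq w)
  have hconds := eq_zero_and_nonpos_of_isLocalMax hder hder₂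
    (by simpa [IsLocalMax, IsMaxFilter] using hline.eventually hmax)
  simp only [zero_smul, add_zero] at hconds
  refine ⟨hconds.1, le_of_eq_of_le ?_ hconds.2⟩
  field_simp

theorem fderiv_fderiv_fderiv_apply_comm {u : E → ℝ} {x : E} (hu : ContDiffAt ℝ 3 u x)
    (v w ξ : E) :
    fderiv ℝ (fderiv ℝ fun y ↦ fderiv ℝ u y ξ) x v w =
      fderiv ℝ (fun y ↦ fderiv ℝ (fderiv ℝ u) y v w) x ξ := by
  have hu₁ : ContDiffAt ℝ 2 (fderiv ℝ u) x := hu.fderiv_right (by norm_num)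
  have hu₂ : DifferentiableAt ℝ (fderiv ℝ (fderiv ℝ u)) x :=
    (hu₁.fderiv_right (m := 1) (by norm_num)).differentiableAt (by simp)
  have hfirst : (fderiv ℝ fun y ↦ fderiv ℝ u y ξ) =ᶠ[𝓝 x] fun y ↦ fderiv ℝ (fderiv ℝ u) y ξ := by
    filter_upwards [hu.eventually (by simp)] with y hy
    have hy₂ : ContDiffAt ℝ 2 u y := hy.of_le (by norm_num)
    rw [(hasFDerivAt_fderiv_apply hy₂ ξ).fderiv]
    ext z
    exact hy₂.isSymmSndFDerivAt (by simp) z ξ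
  have hslot : HasFDerivAt (fun y ↦ fderiv ℝ (fderiv ℝ u) y ξ)
      ((fderiv ℝ (fderiv ℝ (fderiv ℝ u)) x).flip ξ) x :=
    (hu₂.hasFDerivAt.clm_apply (hasFDerivAt_const ξ x)).congr_fderiv (by ext; simp)
  have hentry : HasFDerivAt (fun y ↦ fderiv ℝ (fderiv ℝ u) y v w)
      (((fderiv ℝ (fderiv ℝ (fderiv ℝ u)) x).flip v).flip w) x :=
    ((hu₂.hasFDerivAt.clm_apply (hasFDerivAt_const v x)).clm_apply
      (hasFDerivAt_const w x)).congr_fderiv (by ext; simp)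
  rw [hfirst.fderiv_eq, hslot.fderiv, hentry.fderiv]
  exact congrArg (· w) (hu₁.isSymmSndFDerivAt (by simp) v ξ)

theorem concaveOn_le_add_fderiv {s : Set E} {f : E → ℝ} (hf : ConcaveOn ℝ s f) {x y : E}
    (hx : x ∈ s) (hy : y ∈ s) (hd : DifferentiableAt ℝ f x) :
    f y ≤ f x + fderiv ℝ f x (y - x) := by
  have hline : HasDerivAt (f ∘ AffineMap.lineMap x y) (fderiv ℝ f x (y - x)) (0 : ℝ) :=
    hd.hasFDerivAt.comp_hasDerivAt_of_eq 0 AffineMap.hasDerivAt_lineMap (by simp)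
  have hslope := (hf.comp_affineMap (AffineMap.lineMap x y)).slope_le_of_hasDerivAt
    (x := 0) (y := 1) (by simpa) (by simpa) zero_lt_one hline
  simp only [slope_def_field, Function.comp_apply, AffineMap.lineMap_apply_one,
    AffineMap.lineMap_apply_zero, sub_zero, div_one] at hslope
  linarith

theorem fderiv_apply_self_of_homogeneous {f : E → ℝ} {x : E} (hd : DifferentiableAt ℝ f x)
    (hf : ∀ t : ℝ, 0 < t → f (t • x) = t * f x) : fderiv ℝ f x x = f x := by
  have hray : HasDerivAt (fun t : ℝ ↦ f (t • x)) (fderiv ℝ f x x) 1 :=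
    hd.hasFDerivAt.comp_hasDerivAt_of_eq 1
      (by simpa using (hasDerivAt_id (1 : ℝ)).smul_const x) (by simp)
  have hlin : HasDerivAt (fun t : ℝ ↦ t * f x) (f x) 1 := by
    simpa using (hasDerivAt_id (1 : ℝ)).mul_const (f x)
  refine hray.unique (hlin.congr_of_eventuallyEq ?_)
  filter_upwards [lt_mem_nhds one_pos] with t ht using hf t ht

end Calculus

section SymmetricConcave

open Matrix

variable {ι : Type*} [Fintype ι] [DecidableEq ι]

theorem mulVec_mem_and_le_of_mem_doublyStochastic {Γ : Set (ι → ℝ)} {f : (ι → ℝ) → ℝ}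
    (hf : ConcaveOn ℝ Γ f) {μ : ι → ℝ}
    (hμ : ∀ σ : Equiv.Perm ι, μ ∘ σ ∈ Γ) (hfμ : ∀ σ : Equiv.Perm ι, f (μ ∘ σ) = f μ)
    {S : Matrix ι ι ℝ} (hS : S ∈ doublyStochastic ℝ ι) : S *ᵥ μ ∈ Γ ∧ f μ ≤ f (S *ᵥ μ) := by
  have hconv : Convex ℝ {T : Matrix ι ι ℝ | T *ᵥ μ ∈ Γ ∧ f μ ≤ f (T *ᵥ μ)} := by
    intro A hA B hB a b ha hb hab
    simpa only [Set.mem_ofPred_eq, add_mulVec, smul_mulVec] using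
      hf.convex_ge (f μ) hA hB ha hb hab
  have hperm : {σ.permMatrix ℝ | σ : Equiv.Perm ι} ⊆
      {T : Matrix ι ι ℝ | T *ᵥ μ ∈ Γ ∧ f μ ≤ f (T *ᵥ μ)} := by
    rintro _ ⟨σ, rfl⟩
    simpa only [Set.mem_ofPred_eq, permMatrix_mulVec] using ⟨hμ σ, (hfμ σ).ge⟩
  rw [← SetLike.mem_coe, doublyStochastic_eq_convexHull_permMatrix] at hS
  exact convexHull_min hperm hconv hS

theorem sq_inner_mem_doublyStochastic {E : Type*} [NormedAddCommGroup E] [InnerProductSpace ℝ E]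
    (e b : OrthonormalBasis ι ℝ E) :
    (Matrix.of fun i j ↦ inner ℝ (b j) (e i) ^ 2) ∈ doublyStochastic ℝ ι := by
  refine mem_doublyStochastic_iff_sum.2 ⟨fun i j ↦ sq_nonneg _, fun i ↦ ?_, fun j ↦ ?_⟩
  · simpa using b.sum_sq_norm_inner_right (e i)
  · simpa using e.sum_sq_norm_inner_left (b j)

theorem fderiv_eq_sum_fpd {n : ℕ} (f : (Fin n → ℝ) → ℝ) (lam w : Fin n → ℝ) :
    fderiv ℝ f lam w = ∑ i, fpd f i lam * w i := by
  rw [← ContinuousLinearMap.coe_coe, LinearMap.pi_apply_eq_sum_univ]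
  refine Finset.sum_congr rfl fun i _ ↦ ?_
  rw [smul_eq_mul, mul_comm, ContinuousLinearMap.coe_coe, fpd]
  congr 2
  ext j
  simp [Pi.single_apply, eq_comm]

end SymmetricConcave

section HessianEigenbasis

variable {n : ℕ} {u : EuclideanSpace ℝ (Fin n) → ℝ} {x : EuclideanSpace ℝ (Fin n)}
  {e : OrthonormalBasis (Fin n) ℝ (EuclideanSpace ℝ (Fin n))}

/-- The orthonormal basis `e` diagonalises the Hessian `D²u(x)`, its `i`-th vector belonging to the
eigenvalue `hessEigen u x i`. The Hessian is encoded as the bilinear form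
`fderiv ℝ (fderiv ℝ u) x`. -/
def IsHessianEigenbasis (u : EuclideanSpace ℝ (Fin n) → ℝ) (x : EuclideanSpace ℝ (Fin n))
    (e : OrthonormalBasis (Fin n) ℝ (EuclideanSpace ℝ (Fin n))) : Prop :=
  ∀ i w, fderiv ℝ (fderiv ℝ u) x (e i) w = hessEigen u x i * inner ℝ (e i) w

theorem fderiv_fderiv_eq_inner_hessianMatrix_mulVec (v w : EuclideanSpace ℝ (Fin n)) :
    fderiv ℝ (fderiv ℝ u) x v w =
      inner ℝ v (WithLp.toLp 2 ((hessianMatrix u x).mulVec w.ofLp)) := by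
  conv_lhs => rw [← (EuclideanSpace.basisFun (Fin n) ℝ).sum_repr v,
    ← (EuclideanSpace.basisFun (Fin n) ℝ).sum_repr w]
  simp only [map_sum, map_smul, sum_apply, smul_apply, smul_eq_mul, Finset.mul_sum,
    EuclideanSpace.basisFun_repr, EuclideanSpace.basisFun_apply, PiLp.inner_apply, Matrix.mulVec,
    dotProduct, hessianMatrix, iteratedFDeriv_two_apply, Real.inner_apply, Matrix.cons_val_zero,
    Matrix.cons_val_one]
  rw [Finset.sum_comm]
  exact Finset.sum_congr rfl fun i _ ↦ Finset.sum_congr rfl fun j _ ↦ by ring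

theorem exists_isHessianEigenbasis (hu : ContDiffAt ℝ 2 u x) : ∃ e, IsHessianEigenbasis u x e := by
  have hsymm : IsSymmSndFDerivAt ℝ u x := hu.isSymmSndFDerivAt (by simp)
  have hherm : (hessianMatrix u x).IsHermitian := by
    ext i j
    simpa [hessianMatrix, iteratedFDeriv_two_apply] using hsymm _ _
  refine ⟨hherm.eigenvectorBasis, fun i w ↦ ?_⟩
  rw [hsymm.eq, fderiv_fderiv_eq_inner_hessianMatrix_mulVec, hherm.mulVec_eigenvectorBasis,
    WithLp.toLp_smul, WithLp.toLp_ofLp, inner_smul_right, real_inner_comm, hessEigen,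
    dif_pos hherm]

namespace IsHessianEigenbasis

theorem apply_self (he : IsHessianEigenbasis u x e) (i : Fin n) :
    fderiv ℝ (fderiv ℝ u) x (e i) (e i) = hessEigen u x i := by
  rw [he, real_inner_self_eq_norm_sq, e.norm_eq_one, one_pow, mul_one]

theorem apply_eq_sum (he : IsHessianEigenbasis u x e) (v : EuclideanSpace ℝ (Fin n)) :
    fderiv ℝ (fderiv ℝ u) x v v = ∑ i, inner ℝ (e i) v ^ 2 * hessEigen u x i := by
  conv_lhs => enter [1]; rw [← e.sum_repr' v]
  simp only [map_sum, map_smul, sum_apply, smul_apply, smul_eq_mul, he _ v]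
  exact Finset.sum_congr rfl fun i _ ↦ by ring

end IsHessianEigenbasis

end HessianEigenbasis

section CriticalPoint

variable {α ε d r v N₁ N₂ D₁ D₂ M : ℝ}

theorem sq_sub_add_mul_sq_le_max (hα : 0 < α) (s q : ℝ) :
    (α * s - q) ^ 2 + α * s ^ 2 ≤ (9 + 4 / α) * max ((α * s / 2) ^ 2) (q ^ 2) := by
  set m := max ((α * s / 2) ^ 2) (q ^ 2)
  have hs : (α * s / 2) ^ 2 ≤ m := le_max_left _ _
  have hq : q ^ 2 ≤ m := le_max_right _ _
  have hdiff : (α * s - q) ^ 2 ≤ 9 * m := by nlinarith [sq_nonneg (α * s / 2 + q)]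
  have hsq : α * s ^ 2 = 4 / α * (α * s / 2) ^ 2 := by field_simp; ring
  calc (α * s - q) ^ 2 + α * s ^ 2 ≤ 9 * m + 4 / α * m := by rw [hsq]; gcongr
    _ = (9 + 4 / α) * m := by ring

theorem half_mul_le_of_sq_lt {lam s q : ℝ} (hr : 0 ≤ r) (hfirst : lam * s = r * (α * s - q))
    (hdom : q ^ 2 < (α * s / 2) ^ 2) (hα : 0 < α) : α * r / 2 ≤ lam := by
  have hs : 0 < s ^ 2 := by
    refine sq_pos_of_ne_zero fun hs ↦ ?_
    rw [hs, mul_zero, zero_div] at hdom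
    nlinarith [sq_nonneg q]
  have habs : |q * s| ≤ α * s ^ 2 / 2 := by
    refine abs_le_of_sq_le_sq ?_ (by positivity)
    nlinarith [mul_le_mul_of_nonneg_right hdom.le hs.le]
  refine le_of_mul_le_mul_right ?_ hs
  calc α * r / 2 * s ^ 2 = r * (α * s ^ 2 - α * s ^ 2 / 2) := by ring
    _ ≤ r * (α * s ^ 2 - q * s) := by gcongr; exact (le_abs_self _).trans habs
    _ = lam * s * s := by rw [hfirst]; ring
    _ = lam * s ^ 2 := by ring

/-- The relations satisfied at an interior maximum of
`log |Du| + α log v + (ε / 2) |x - p|²`, where `v = c - u` for a solution `u` of `F(D²u) = 1`,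
written in an orthonormal eigenbasis `(eᵢ)` of `D²u` with eigenvalues `lam i`: `F i` is
`∂f/∂λᵢ`, `s i` is `Dᵢu / v`, `q i` is `ε (x - p)ᵢ`, `a i` is `Dᵢᵢ(D_ξ u) / |Du|` with
`ξ = Du / |Du|`, and `r` is `|Du|² / v`. -/
structure CriticalSystem {ι : Type*} [Fintype ι] (α ε r v : ℝ) (F lam s q a : ι → ℝ) : Prop where
  pos : ∀ i, 0 < F i
  linearised : ∑ i, F i * a i = 0
  euler : ∑ i, F i * lam i = 1
  sum_sq : ∑ i, s i ^ 2 = r / v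
  first_order : ∀ i, lam i * s i = r * (α * s i - q i)
  second_order : ∀ i, a i - (α * s i - q i) ^ 2 - α * (lam i / v + s i ^ 2) + ε ≤ 0

/-- The constant `K` for which `∑ᵢ ∂f/∂λᵢ ≤ K / v` at a maximum where `|Du|` is large. -/
def traceConst (α ε D₂ : ℝ) : ℝ := α / ε * ((9 + 4 / α) * D₂ + 2)

/-- The bound for `|Du|² / v` at a maximum point: one summand for each way the argument can end,
namely that `Du` is dominated by the derivative of the quadratic weight, that no eigenvalue reaches
the range of condition D, or that conditions D and N apply together. -/
def ratioBound (α ε d N₁ N₂ D₁ D₂ v : ℝ) : ℝ :=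
  (2 * ε * d / α) ^ 2 * v + 2 * D₁ / α +
    2 * D₂ * N₁ * traceConst α ε D₂ ^ N₂ / α * v ^ (-N₂)

theorem traceConst_pos (hα : 0 < α) (hε : 0 < ε) (hD₂ : 0 < D₂) : 0 < traceConst α ε D₂ := by
  unfold traceConst
  positivity

namespace CriticalSystem

variable {ι : Type*} [Fintype ι] {F lam s q a : ι → ℝ}

theorem exists_sq_lt (h : CriticalSystem α ε r v F lam s q a) (hα : 0 < α) (hv : 0 < v)
    (hq : ∑ i, q i ^ 2 ≤ (ε * d) ^ 2) (hr : (2 * ε * d / α) ^ 2 * v < r) :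
    ∃ i, q i ^ 2 < (α * s i / 2) ^ 2 := by
  have hsum : ∑ i, q i ^ 2 < ∑ i, (α * s i / 2) ^ 2 := calc
    ∑ i, q i ^ 2 ≤ (ε * d) ^ 2 := hq
    _ = (α / 2) ^ 2 * (2 * ε * d / α) ^ 2 := by field_simp
    _ < (α / 2) ^ 2 * (r / v) := by gcongr; rwa [lt_div_iff₀ hv]
    _ = ∑ i, (α * s i / 2) ^ 2 := by
      rw [← h.sum_sq, Finset.mul_sum]
      exact Finset.sum_congr rfl fun i _ ↦ by ring
  obtain ⟨i, -, hi⟩ := Finset.exists_lt_of_sum_lt hsum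
  exact ⟨i, hi⟩

theorem mul_le_of_sq_lt (h : CriticalSystem α ε r v F lam s q a) (hα : 0 < α) (hr : 0 ≤ r)
    (hD : ∀ i, D₁ < lam i → F i * lam i ≤ D₂) (hlarge : D₁ < α * r / 2) {i : ι}
    (hi : q i ^ 2 < (α * s i / 2) ^ 2) : F i * (α * r / 2) ≤ D₂ := by
  have hlam : α * r / 2 ≤ lam i := half_mul_le_of_sq_lt hr (h.first_order i) hi hα
  exact (mul_le_mul_of_nonneg_left hlam (h.pos i).le).trans (hD i (hlarge.trans_le hlam))

theorem mul_sum_le (h : CriticalSystem α ε r v F lam s q a) :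
    ε * ∑ i, F i ≤ ∑ i, F i * ((α * s i - q i) ^ 2 + α * s i ^ 2) + α / v := by
  have hsum : ∑ i, F i * ε ≤ ∑ i, (F i * ((α * s i - q i) ^ 2 + α * s i ^ 2)
      + α / v * (F i * lam i) - F i * a i) := by
    refine Finset.sum_le_sum fun i _ ↦ ?_
    have hsecond := mul_nonpos_of_nonneg_of_nonpos (h.pos i).le (h.second_order i)
    linear_combination hsecond
  rw [Finset.sum_sub_distrib, Finset.sum_add_distrib, ← Finset.mul_sum, h.euler, h.linearised,
    ← Finset.sum_mul] at hsum
  linarith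

-- Either `s i` dominates and condition D controls `F i`, or `q i` dominates and is absorbed by `ε`.
theorem mul_error_le (h : CriticalSystem α ε r v F lam s q a) (hα : 0 < α) (hr : 0 < r)
    (hD₂ : 0 < D₂) (hD : ∀ i, D₁ < lam i → F i * lam i ≤ D₂) (hlarge : D₁ < α * r / 2) (i : ι) :
    F i * ((α * s i - q i) ^ 2 + α * s i ^ 2) ≤
      (9 + 4 / α) * (F i * q i ^ 2 + α * D₂ / (2 * r) * s i ^ 2) := by
  have hF := (h.pos i).le
  have hmax : F i * max ((α * s i / 2) ^ 2) (q i ^ 2) ≤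
      F i * q i ^ 2 + α * D₂ / (2 * r) * s i ^ 2 := by
    rcases lt_or_ge (q i ^ 2) ((α * s i / 2) ^ 2) with hi | hi
    · rw [max_eq_left hi.le]
      calc F i * (α * s i / 2) ^ 2 = F i * (α * r / 2) * (α / (2 * r) * s i ^ 2) := by field_simp
        _ ≤ D₂ * (α / (2 * r) * s i ^ 2) := by
          gcongr
          exact h.mul_le_of_sq_lt hα hr.le hD hlarge hi
        _ = α * D₂ / (2 * r) * s i ^ 2 := by ring
        _ ≤ F i * q i ^ 2 + α * D₂ / (2 * r) * s i ^ 2 := le_add_of_nonneg_left (by positivity)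
    · rw [max_eq_right hi]
      exact le_add_of_nonneg_right (by positivity)
  calc F i * ((α * s i - q i) ^ 2 + α * s i ^ 2)
      ≤ F i * ((9 + 4 / α) * max ((α * s i / 2) ^ 2) (q i ^ 2)) := by
        gcongr
        exact sq_sub_add_mul_sq_le_max hα _ _
    _ = (9 + 4 / α) * (F i * max ((α * s i / 2) ^ 2) (q i ^ 2)) := by ring
    _ ≤ (9 + 4 / α) * (F i * q i ^ 2 + α * D₂ / (2 * r) * s i ^ 2) := by gcongr

theorem sum_le_traceConst_div (h : CriticalSystem α ε r v F lam s q a) (hα : 0 < α) (hε : 0 < ε)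
    (hr : 0 < r) (hD₂ : 0 < D₂) (hεd : 2 * (9 + 4 / α) * ε * d ^ 2 ≤ 1)
    (hq : ∑ i, q i ^ 2 ≤ (ε * d) ^ 2) (hD : ∀ i, D₁ < lam i → F i * lam i ≤ D₂)
    (hlarge : D₁ < α * r / 2) : ∑ i, F i ≤ traceConst α ε D₂ / v := by
  have hF : 0 ≤ ∑ i, F i := Finset.sum_nonneg fun i _ ↦ (h.pos i).le
  have hFq : ∑ i, F i * q i ^ 2 ≤ (∑ i, F i) * (ε * d) ^ 2 := by
    rw [Finset.sum_mul]
    exact Finset.sum_le_sum fun i _ ↦ mul_le_mul_of_nonneg_left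
      ((Finset.single_le_sum (fun j _ ↦ sq_nonneg (q j)) (Finset.mem_univ i)).trans hq) (h.pos i).le
  have herror : ∑ i, F i * ((α * s i - q i) ^ 2 + α * s i ^ 2) ≤
      ε / 2 * ∑ i, F i + (9 + 4 / α) * (α * D₂ / 2) / v := calc
    _ ≤ ∑ i, (9 + 4 / α) * (F i * q i ^ 2 + α * D₂ / (2 * r) * s i ^ 2) :=
      Finset.sum_le_sum fun i _ ↦ h.mul_error_le hα hr hD₂ hD hlarge i
    _ = (9 + 4 / α) * (∑ i, F i * q i ^ 2) + (9 + 4 / α) * (α * D₂ / (2 * r) * (r / v)) := by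
      rw [← Finset.mul_sum, Finset.sum_add_distrib, ← Finset.mul_sum, h.sum_sq, mul_add]
    _ ≤ (9 + 4 / α) * ((∑ i, F i) * (ε * d) ^ 2) + (9 + 4 / α) * (α * D₂ / (2 * r) * (r / v)) := by
      gcongr
    _ = ε / 2 * (∑ i, F i) * (2 * (9 + 4 / α) * ε * d ^ 2)
        + (9 + 4 / α) * (α * D₂ / 2) / v := by field_simp
    _ ≤ ε / 2 * (∑ i, F i) * 1 + (9 + 4 / α) * (α * D₂ / 2) / v := by gcongr
    _ = _ := by rw [mul_one]
  have htrace : ε / 2 * ∑ i, F i ≤ (9 + 4 / α) * (α * D₂ / 2) / v + α / v := by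
    linarith [h.mul_sum_le]
  calc ∑ i, F i = 2 / ε * (ε / 2 * ∑ i, F i) := by field_simp
    _ ≤ 2 / ε * ((9 + 4 / α) * (α * D₂ / 2) / v + α / v) := by gcongr
    _ = traceConst α ε D₂ / v := by rw [traceConst]; ring

theorem le_ratioBound (h : CriticalSystem α ε r v F lam s q a) (hα : 0 < α) (hε : 0 < ε)
    (hr : 0 < r) (hv : 0 < v) (hN₁ : 0 < N₁) (hD₁ : 0 < D₁) (hD₂ : 0 < D₂)
    (hεd : 2 * (9 + 4 / α) * ε * d ^ 2 ≤ 1) (hq : ∑ i, q i ^ 2 ≤ (ε * d) ^ 2)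
    (hD : ∀ i, D₁ < lam i → F i * lam i ≤ D₂)
    (hN : ∀ C : ℝ, 0 < C → ∑ i, F i ≤ C → ∀ i, 1 / (N₁ * C ^ N₂) ≤ F i) :
    r ≤ ratioBound α ε d N₁ N₂ D₁ D₂ v := by
  have hK : 0 < traceConst α ε D₂ := traceConst_pos hα hε hD₂
  have hterm₁ : 0 ≤ (2 * ε * d / α) ^ 2 * v := by positivity
  have hterm₂ : 0 ≤ 2 * D₁ / α := by positivity
  have hterm₃ : 0 ≤ 2 * D₂ * N₁ * traceConst α ε D₂ ^ N₂ / α * v ^ (-N₂) := by positivity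
  unfold ratioBound
  rcases le_or_gt r ((2 * ε * d / α) ^ 2 * v) with hsmall | hweight
  · linarith
  rcases le_or_gt r (2 * D₁ / α) with hsmall | heig
  · linarith
  have hlarge : D₁ < α * r / 2 := by
    rw [div_lt_iff₀ hα] at heig
    linarith
  obtain ⟨i, hi⟩ := h.exists_sq_lt hα hv hq hweight
  have hupper : F i * (α * r / 2) ≤ D₂ := h.mul_le_of_sq_lt hα hr.le hD hlarge hi
  have hlower : 1 / (N₁ * (traceConst α ε D₂ / v) ^ N₂) ≤ F i :=
    hN _ (div_pos hK hv) (h.sum_le_traceConst_div hα hε hr hD₂ hεd hq hD hlarge) i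
  have hthird : r ≤ 2 * D₂ * N₁ * traceConst α ε D₂ ^ N₂ / α * v ^ (-N₂) := calc
    r = 2 / α * (N₁ * (traceConst α ε D₂ / v) ^ N₂) *
        (1 / (N₁ * (traceConst α ε D₂ / v) ^ N₂) * (α * r / 2)) := by field_simp
    _ ≤ 2 / α * (N₁ * (traceConst α ε D₂ / v) ^ N₂) * (F i * (α * r / 2)) := by gcongr
    _ ≤ 2 / α * (N₁ * (traceConst α ε D₂ / v) ^ N₂) * D₂ := by gcongr
    _ = _ := by rw [Real.div_rpow hK.le hv.le, Real.rpow_neg hv.le]; ring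
  linarith

end CriticalSystem

theorem rpow_mul_ratioBound_le {β : ℝ} (hβ : 0 ≤ β) (hN₂ : N₂ ≤ β) (hα : 0 < α) (hε : 0 < ε)
    (hN₁ : 0 < N₁) (hD₁ : 0 < D₁) (hD₂ : 0 < D₂) (hv : 0 < v) (hvM : v ≤ M) :
    v ^ β * ratioBound α ε d N₁ N₂ D₁ D₂ v ≤ M ^ β * ratioBound α ε d N₁ N₂ D₁ D₂ M := by
  have hK : 0 < traceConst α ε D₂ := traceConst_pos hα hε hD₂
  have hM : 0 < M := hv.trans_le hvM
  have hexpand : ∀ t : ℝ, 0 < t → t ^ β * ratioBound α ε d N₁ N₂ D₁ D₂ t =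
      (2 * ε * d / α) ^ 2 * (t ^ β * t) + 2 * D₁ / α * t ^ β +
        2 * D₂ * N₁ * traceConst α ε D₂ ^ N₂ / α * t ^ (β - N₂) := by
    intro t ht
    rw [ratioBound, sub_eq_add_neg β, Real.rpow_add ht]
    ring
  rw [hexpand v hv, hexpand M hM]
  gcongr

end CriticalPoint

section AdmissibleSolution

variable {n : ℕ} {Γ : Set (Fin n → ℝ)} {f : (Fin n → ℝ) → ℝ} {Ω : Set (EuclideanSpace ℝ (Fin n))}
  {u : EuclideanSpace ℝ (Fin n) → ℝ} {x y : EuclideanSpace ℝ (Fin n)}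

/-- `u` is a `C³` admissible solution of `F(D²u) = 1` in the open set `Ω`. -/
structure IsAdmissibleSolution (Γ : Set (Fin n → ℝ)) (f : (Fin n → ℝ) → ℝ)
    (Ω : Set (EuclideanSpace ℝ (Fin n))) (u : EuclideanSpace ℝ (Fin n) → ℝ) : Prop where
  isOpen : IsOpen Ω
  contDiffOn : ContDiffOn ℝ 3 u Ω
  admissible : ∀ x ∈ Ω, hessEigen u x ∈ Γ
  eq_one : ∀ x ∈ Ω, f (hessEigen u x) = 1

theorem IsConcaveEllipticHessianOp.differentiableAt (hf : IsConcaveEllipticHessianOp Γ f)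
    (hΓ : IsConvexInvariantCone Γ) {lam : Fin n → ℝ} (hlam : lam ∈ Γ) : DifferentiableAt ℝ f lam :=
  (hf.1.contDiffAt (hΓ.1.mem_nhds hlam)).differentiableAt (by simp)

namespace IsAdmissibleSolution

theorem contDiffAt (hu : IsAdmissibleSolution Γ f Ω u) (hx : x ∈ Ω) : ContDiffAt ℝ 3 u x :=
  hu.contDiffOn.contDiffAt (hu.isOpen.mem_nhds hx)

theorem sum_fpd_mul_hessEigen (hu : IsAdmissibleSolution Γ f Ω u) (hΓ : IsConvexInvariantCone Γ)
    (hf : IsConcaveEllipticHessianOp Γ f) (hx : x ∈ Ω) :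
    ∑ i, fpd f i (hessEigen u x) * hessEigen u x i = 1 := by
  have hlam := hu.admissible x hx
  rw [← fderiv_eq_sum_fpd, fderiv_apply_self_of_homogeneous (hf.differentiableAt hΓ hlam)
    (hf.2.2.2.2.2 _ hlam), hu.eq_one x hx]

-- The diagonal of `D²u(y)` in the basis `e` is a doubly stochastic image of its eigenvalues, so `f`
-- is at least `1` there; the tangent plane of `f` at `λ(D²u(x))` lies above `f`.
theorem one_le_sum_fpd_mul (hu : IsAdmissibleSolution Γ f Ω u) (hΓ : IsConvexInvariantCone Γ)
    (hf : IsConcaveEllipticHessianOp Γ f) (hx : x ∈ Ω) (hy : y ∈ Ω)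
    (e : OrthonormalBasis (Fin n) ℝ (EuclideanSpace ℝ (Fin n))) :
    1 ≤ ∑ i, fpd f i (hessEigen u x) * fderiv ℝ (fderiv ℝ u) y (e i) (e i) := by
  obtain ⟨b, hb⟩ := exists_isHessianEigenbasis ((hu.contDiffAt hy).of_le (by norm_num))
  have hlam := hu.admissible x hx
  have hmu := hu.admissible y hy
  have hdiag : (Matrix.of fun i j ↦ inner ℝ (b j) (e i) ^ 2).mulVec (hessEigen u y) =
      fun i ↦ fderiv ℝ (fderiv ℝ u) y (e i) (e i) := by
    ext i
    rw [hb.apply_eq_sum]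
    rfl
  obtain ⟨hmem, hge⟩ := mulVec_mem_and_le_of_mem_doublyStochastic hf.2.1
    (hΓ.2.2.2.2.2 _ hmu) (hf.2.2.1 _ hmu) (sq_inner_mem_doublyStochastic e b)
  rw [hdiag] at hmem hge
  have htangent := concaveOn_le_add_fderiv hf.2.1 hlam hmem (hf.differentiableAt hΓ hlam)
  rw [map_sub, fderiv_eq_sum_fpd, fderiv_eq_sum_fpd, hu.sum_fpd_mul_hessEigen hΓ hf hx,
    hu.eq_one x hx] at htangent
  linarith [hu.eq_one y hy]

-- By `one_le_sum_fpd_mul` the frozen-coefficient operator applied to `u` has a minimum at `x`.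
theorem sum_fpd_mul_fderiv_apply_eq_zero (hu : IsAdmissibleSolution Γ f Ω u)
    (hΓ : IsConvexInvariantCone Γ) (hf : IsConcaveEllipticHessianOp Γ f) (hx : x ∈ Ω)
    {e : OrthonormalBasis (Fin n) ℝ (EuclideanSpace ℝ (Fin n))} (he : IsHessianEigenbasis u x e)
    (ξ : EuclideanSpace ℝ (Fin n)) :
    ∑ i, fpd f i (hessEigen u x) *
      fderiv ℝ (fderiv ℝ fun y ↦ fderiv ℝ u y ξ) x (e i) (e i) = 0 := by
  have hu₃ := hu.contDiffAt hx
  have hdiff (i : Fin n) :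
      DifferentiableAt ℝ (fun y ↦ fderiv ℝ (fderiv ℝ u) y (e i) (e i)) x := by
    have hu₂ : DifferentiableAt ℝ (fderiv ℝ (fderiv ℝ u)) x :=
      ((hu₃.fderiv_right (m := 2) (by norm_num)).fderiv_right (m := 1)
        (by norm_num)).differentiableAt (by simp)
    fun_prop
  have hmin : IsLocalMin (fun y ↦ ∑ i, fpd f i (hessEigen u x) *
      fderiv ℝ (fderiv ℝ u) y (e i) (e i)) x := by
    filter_upwards [hu.isOpen.mem_nhds hx] with y hy
    simp only [he.apply_self, hu.sum_fpd_mul_hessEigen hΓ hf hx]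
    exact hu.one_le_sum_fpd_mul hΓ hf hx hy e
  have hsum := HasFDerivAt.fun_sum (u := Finset.univ) fun i _ ↦
    (hdiff i).hasFDerivAt.const_mul (fpd f i (hessEigen u x))
  have hzero := congrArg (· ξ) (hmin.hasFDerivAt_eq_zero hsum)
  simpa only [sum_apply, smul_apply, smul_eq_mul, zero_apply,
    ← fderiv_fderiv_fderiv_apply_comm hu₃] using hzero

theorem not_isLocalMax (hu : IsAdmissibleSolution Γ f Ω u) (hΓ : IsConvexInvariantCone Γ)
    (hf : IsConcaveEllipticHessianOp Γ f) (hx : x ∈ Ω) : ¬ IsLocalMax u x := by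
  intro hmax
  have hu₂ : ContDiffAt ℝ 2 u x := (hu.contDiffAt hx).of_le (by norm_num)
  obtain ⟨e, he⟩ := exists_isHessianEigenbasis hu₂
  have hsum : ∑ i, fpd f i (hessEigen u x) * hessEigen u x i ≤ 0 :=
    Finset.sum_nonpos fun i _ ↦ mul_nonpos_of_nonneg_of_nonpos
      (hf.2.2.2.1 _ (hu.admissible x hx) i).le
      (he.apply_self i ▸ fderiv_fderiv_nonpos_of_isLocalMax hu₂ hmax (e i))
  rw [hu.sum_fpd_mul_hessEigen hΓ hf hx] at hsum
  exact hsum.not_gt one_pos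

theorem lt_zero (hu : IsAdmissibleSolution Γ f Ω u) (hΓ : IsConvexInvariantCone Γ)
    (hf : IsConcaveEllipticHessianOp Γ f) (hΩ : Bornology.IsBounded Ω)
    (hcont : ContinuousOn u (closure Ω)) (hbdry : ∀ y ∈ frontier Ω, u y ≤ 0) (hx : x ∈ Ω) :
    u x < 0 := by
  obtain ⟨z, hz, hmax⟩ := hΩ.isCompact_closure.exists_isMaxOn ⟨x, subset_closure hx⟩ hcont
  have hnot {y} (hy : y ∈ Ω) : ¬ IsMaxOn u (closure Ω) y := fun h ↦
    hu.not_isLocalMax hΓ hf hy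
      (h.isLocalMax (mem_of_superset (hu.isOpen.mem_nhds hy) subset_closure))
  have hzΩ : z ∈ frontier Ω := ⟨hz, fun h ↦ hnot (interior_subset h) hmax⟩
  refine ((hmax (subset_closure hx)).trans (hbdry z hzΩ)).lt_of_ne fun hux ↦ hnot hx fun y hy ↦ ?_
  rw [Set.mem_ofPred_eq, hux]
  exact (hmax hy).trans (hbdry z hzΩ)

end IsAdmissibleSolution

end AdmissibleSolution

section WeightedGradient

variable {E : Type*} [NormedAddCommGroup E] [InnerProductSpace ℝ E]

theorem hasFDerivAt_quadratic_weight (ε : ℝ) (p x : E) :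
    HasFDerivAt (fun y ↦ ε / 2 * ‖y - p‖ ^ 2) (ε • innerSL ℝ (x - p)) x := by
  refine (((hasFDerivAt_id x).sub_const p).norm_sq.const_mul (ε / 2)).congr_fderiv ?_
  ext w
  simp
  ring

theorem fderiv_fderiv_quadratic_weight (ε : ℝ) (p x w : E) :
    fderiv ℝ (fderiv ℝ fun y ↦ ε / 2 * ‖y - p‖ ^ 2) x w w = ε * ‖w‖ ^ 2 := by
  have hfirst : (fderiv ℝ fun y ↦ ε / 2 * ‖y - p‖ ^ 2) = fun y ↦ ε • innerSL ℝ (y - p) :=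
    funext fun y ↦ (hasFDerivAt_quadratic_weight ε p y).fderiv
  have hsecond : HasFDerivAt (fun y ↦ ε • innerSL ℝ (y - p)) (ε • innerSL ℝ) x :=
    ((innerSL ℝ).hasFDerivAt.comp x ((hasFDerivAt_id x).sub_const p)).const_smul ε
  rw [hfirst, hsecond.fderiv, smul_apply, smul_apply, innerSL_apply_apply,
    real_inner_self_eq_norm_sq, smul_eq_mul]

variable [CompleteSpace E] {u : E → ℝ} {Ω : Set E} {α ε c : ℝ} {p x : E}

/-- The auxiliary function `(c - u)^α |Du| exp(ε/2 |x - p|²)` of the maximum principle argument. -/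
def weightedGradient (α ε c : ℝ) (p : E) (u : E → ℝ) (y : E) : ℝ :=
  (c - u y) ^ α * ‖gradient u y‖ * Real.exp (ε / 2 * ‖y - p‖ ^ 2)

/-- The direction `Du(x) / |Du(x)|`. -/
def gradientDirection (u : E → ℝ) (x : E) : E := ‖gradient u x‖⁻¹ • gradient u x

theorem inner_gradientDirection (u : E → ℝ) (x w : E) :
    inner ℝ w (gradientDirection u x) = fderiv ℝ u x w / ‖gradient u x‖ := by
  rw [gradientDirection, inner_smul_right, real_inner_comm, inner_gradient_left, div_eq_inv_mul]

theorem fderiv_gradientDirection (u : E → ℝ) (x : E) :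
    fderiv ℝ u x (gradientDirection u x) = ‖gradient u x‖ := by
  rw [← inner_gradient_left, inner_gradientDirection, ← inner_gradient_left,
    real_inner_self_eq_norm_sq, sq, mul_self_div_self]

theorem fderiv_apply_gradientDirection_le (hx : gradient u x ≠ 0) (y : E) :
    fderiv ℝ u y (gradientDirection u x) ≤ ‖gradient u y‖ := by
  have hnorm : ‖gradientDirection u x‖ = 1 := norm_smul_inv_norm hx
  simpa only [inner_gradient_left, hnorm, mul_one] using
    real_inner_le_norm (gradient u y) (gradientDirection u x)

-- Freezing the direction of the gradient replaces `|Du|` by a smaller `C²` function which agrees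
-- with it at `x`.
theorem isLocalMax_log_of_isLocalMax_weightedGradient (hu : ContDiffAt ℝ 1 u x)
    (hx : gradient u x ≠ 0) (hux : u x < c) (hmax : IsLocalMax (weightedGradient α ε c p u) x) :
    IsLocalMax (fun y ↦ Real.log (fderiv ℝ u y (gradientDirection u x)) +
      α * Real.log (c - u y) + ε / 2 * ‖y - p‖ ^ 2) x := by
  have hlog {t v : ℝ} (ht : 0 < t) (hv : 0 < v) (s : ℝ) :
      Real.log (v ^ α * t * Real.exp s) = Real.log t + α * Real.log v + s := by
    rw [Real.log_mul (by positivity) (Real.exp_ne_zero s), Real.log_mul (by positivity) ht.ne',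
      Real.log_rpow hv, Real.log_exp, add_comm (α * _)]
  have hcont : ContinuousAt (fun y ↦ fderiv ℝ u y (gradientDirection u x)) x :=
    (hu.fderiv_right (m := 0) (by norm_num)).continuousAt.clm_apply continuousAt_const
  have hpos : 0 < fderiv ℝ u x (gradientDirection u x) := by
    rw [fderiv_gradientDirection]
    exact norm_pos_iff.2 hx
  filter_upwards [hmax, hcont.eventually_const_lt hpos,
    hu.continuousAt.eventually_lt_const hux] with y hle hypos huy
  have hv : 0 < c - u y := sub_pos.2 huy
  rw [← hlog hypos hv, ← hlog hpos (sub_pos.2 hux), fderiv_gradientDirection]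
  refine Real.log_le_log (by positivity) (le_trans ?_ hle)
  unfold weightedGradient
  gcongr
  exact fderiv_apply_gradientDirection_le hx y

theorem conditions_of_isLocalMax_weightedGradient (hu : ContDiffAt ℝ 3 u x)
    (hx : gradient u x ≠ 0) (hux : u x < c) (hmax : IsLocalMax (weightedGradient α ε c p u) x)
    (w : E) :
    fderiv ℝ (fderiv ℝ u) x w (gradientDirection u x) / ‖gradient u x‖ =
      α * (fderiv ℝ u x w / (c - u x)) - ε * inner ℝ (x - p) w ∧
    fderiv ℝ (fderiv ℝ fun y ↦ fderiv ℝ u y (gradientDirection u x)) x w w / ‖gradient u x‖ -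
      (fderiv ℝ (fderiv ℝ u) x w (gradientDirection u x) / ‖gradient u x‖) ^ 2 -
      α * (fderiv ℝ (fderiv ℝ u) x w w / (c - u x) + (fderiv ℝ u x w / (c - u x)) ^ 2) +
      ε * ‖w‖ ^ 2 ≤ 0 := by
  have hu₂ : ContDiffAt ℝ 2 u x := hu.of_le (by norm_num)
  have hslope : ContDiffAt ℝ 2 (fun y ↦ fderiv ℝ u y (gradientDirection u x)) x :=
    (hu.fderiv_right (m := 2) (by norm_num)).clm_apply contDiffAt_const
  have hgap : ContDiffAt ℝ 2 (fun y ↦ c - u y) x := contDiffAt_const.sub hu₂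
  have hweight : ContDiffAt ℝ 2 (fun y ↦ ε / 2 * ‖y - p‖ ^ 2) x :=
    contDiffAt_const.mul ((contDiffAt_id.sub contDiffAt_const).norm_sq ℝ)
  have hslope₀ := fderiv_gradientDirection u x
  have hgap' : (fderiv ℝ fun y ↦ c - u y) = fun y ↦ -fderiv ℝ u y :=
    funext fun y ↦ fderiv_const_sub c
  obtain ⟨hfirst, hsecond⟩ := log_add_mul_log_add_conditions_of_isLocalMax hslope hgap hweight
    (hslope₀.trans_ne (norm_ne_zero_iff.2 hx)) (sub_pos.2 hux).ne'
    (isLocalMax_log_of_isLocalMax_weightedGradient (hu.of_le (by norm_num)) hx hux hmax) w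
  simp only [hslope₀, (hasFDerivAt_fderiv_apply hu₂ _).fderiv, ContinuousLinearMap.flip_apply,
    hgap', fderiv_fun_neg, neg_apply, (hasFDerivAt_quadratic_weight ε p x).fderiv, smul_apply,
    innerSL_apply_apply, smul_eq_mul, fderiv_fderiv_quadratic_weight] at hfirst hsecond
  constructor
  · linear_combination hfirst
  · linear_combination hsecond

theorem continuousOn_weightedGradient (hα : 0 ≤ α) (hΩ : IsOpen Ω) (hu : ContDiffOn ℝ 1 u Ω) :
    ContinuousOn (weightedGradient α ε c p u) Ω := by
  have hgrad : ContinuousOn (gradient u) Ω :=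
    (InnerProductSpace.toDual ℝ E).symm.continuous.comp_continuousOn
      (hu.continuousOn_fderiv_of_isOpen hΩ le_rfl)
  have hv : ContinuousOn (fun y ↦ (c - u y) ^ α) Ω :=
    (continuousOn_const.sub hu.continuousOn).rpow_const fun _ _ ↦ Or.inr hα
  unfold weightedGradient
  fun_prop

theorem exists_isLocalMax_weightedGradient [ProperSpace E] (hα : 0 < α) (hΩ : IsOpen Ω)
    (hbdd : Bornology.IsBounded Ω) (hu : ContDiffOn ℝ 1 u Ω) (hcont : ContinuousOn u (closure Ω))
    (hbdry : ∀ y ∈ frontier Ω, c < u y) (hx : x ∈ Ω) (hux : u x < c) (hgrad : gradient u x ≠ 0) :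
    ∃ z ∈ Ω, u z < c ∧ gradient u z ≠ 0 ∧ IsLocalMax (weightedGradient α ε c p u) z ∧
      weightedGradient α ε c p u x ≤ weightedGradient α ε c p u z := by
  set K : Set E := closure Ω ∩ u ⁻¹' Set.Iic c
  have hK : IsCompact K := hbdd.isCompact_closure.of_isClosed_subset
    (hcont.preimage_isClosed_of_isClosed isClosed_closure isClosed_Iic) Set.inter_subset_left
  have hKΩ : K ⊆ Ω := fun y hy ↦ by
    by_contra hyΩ
    exact (hbdry y ⟨hy.1, fun h ↦ hyΩ (interior_subset h)⟩).not_ge hy.2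
  have hxK : x ∈ K := ⟨subset_closure hx, hux.le⟩
  obtain ⟨z, hzK, hmax⟩ := hK.exists_isMaxOn ⟨x, hxK⟩
    ((continuousOn_weightedGradient (ε := ε) (c := c) (p := p) hα.le hΩ hu).mono hKΩ)
  have hzΩ : z ∈ Ω := hKΩ hzK
  have hxpos : 0 < weightedGradient α ε c p u x := mul_pos (mul_pos
    (Real.rpow_pos_of_pos (sub_pos.2 hux) α) (norm_pos_iff.2 hgrad)) (Real.exp_pos _)
  have hzpos : weightedGradient α ε c p u z ≠ 0 := (hxpos.trans_le (hmax hxK)).ne'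
  have huz : u z < c := hzK.2.lt_of_ne fun h ↦ hzpos <| by
    simp [weightedGradient, h, Real.zero_rpow hα.ne']
  refine ⟨z, hzΩ, huz, fun h ↦ hzpos (by simp [weightedGradient, h]), ?_, hmax hxK⟩
  refine hmax.isLocalMax ?_
  filter_upwards [hΩ.mem_nhds hzΩ,
    (hu.continuousOn.continuousAt (hΩ.mem_nhds hzΩ)).eventually_lt_const huz] with y hy huy
  exact ⟨subset_closure hy, huy.le⟩

end WeightedGradient

section GradientEstimate

variable {n : ℕ} {Γ : Set (Fin n → ℝ)} {f : (Fin n → ℝ) → ℝ} {Ω : Set (EuclideanSpace ℝ (Fin n))}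
  {u : EuclideanSpace ℝ (Fin n) → ℝ} {p x : EuclideanSpace ℝ (Fin n)}
  {α ε c d N₁ N₂ D₁ D₂ M : ℝ}

namespace IsAdmissibleSolution

theorem criticalSystem (hu : IsAdmissibleSolution Γ f Ω u) (hΓ : IsConvexInvariantCone Γ)
    (hf : IsConcaveEllipticHessianOp Γ f) (hx : x ∈ Ω) (hux : u x < c) (hgrad : gradient u x ≠ 0)
    (hmax : IsLocalMax (weightedGradient α ε c p u) x)
    {e : OrthonormalBasis (Fin n) ℝ (EuclideanSpace ℝ (Fin n))} (he : IsHessianEigenbasis u x e) :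
    CriticalSystem α ε (‖gradient u x‖ ^ 2 / (c - u x)) (c - u x)
      (fun i ↦ fpd f i (hessEigen u x)) (hessEigen u x)
      (fun i ↦ fderiv ℝ u x (e i) / (c - u x)) (fun i ↦ ε * inner ℝ (x - p) (e i))
      (fun i ↦ fderiv ℝ (fderiv ℝ fun y ↦ fderiv ℝ u y (gradientDirection u x)) x (e i) (e i) /
        ‖gradient u x‖) := by
  have hv : 0 < c - u x := sub_pos.2 hux
  have hconds (i : Fin n) :=
    conditions_of_isLocalMax_weightedGradient (hu.contDiffAt hx) hgrad hux hmax (e i)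
  simp only [he.apply_self, he _ (gradientDirection u x), inner_gradientDirection,
    OrthonormalBasis.norm_eq_one, one_pow, mul_one] at hconds
  constructor
  case pos => exact hf.2.2.2.1 _ (hu.admissible x hx)
  case linearised =>
    simp only [← mul_div_assoc, ← Finset.sum_div,
      hu.sum_fpd_mul_fderiv_apply_eq_zero hΓ hf hx he, zero_div]
  case euler => exact hu.sum_fpd_mul_hessEigen hΓ hf hx
  case sum_sq =>
    rw [div_div, ← sq, ← e.sum_sq_inner_left (gradient u x), Finset.sum_div]
    simp only [inner_gradient_left, div_pow]
  case first_order =>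
    intro i
    rw [← (hconds i).1]
    field_simp
  case second_order =>
    intro i
    rw [← (hconds i).1]
    exact (hconds i).2

theorem sq_norm_gradient_div_le_ratioBound (hu : IsAdmissibleSolution Γ f Ω u)
    (hΓ : IsConvexInvariantCone Γ) (hf : IsConcaveEllipticHessianOp Γ f)
    (hN : ConditionN Γ f N₁ N₂) (hD : ConditionD f u Ω D₁ D₂) (hα : 0 < α) (hε : 0 < ε)
    (hN₁ : 0 < N₁) (hD₁ : 0 < D₁) (hD₂ : 0 < D₂) (hεd : 2 * (9 + 4 / α) * ε * d ^ 2 ≤ 1)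
    (hx : x ∈ Ω) (hxp : dist x p ≤ d) (hux : u x < c) (hgrad : gradient u x ≠ 0)
    (hmax : IsLocalMax (weightedGradient α ε c p u) x) :
    ‖gradient u x‖ ^ 2 / (c - u x) ≤ ratioBound α ε d N₁ N₂ D₁ D₂ (c - u x) := by
  obtain ⟨e, he⟩ := exists_isHessianEigenbasis ((hu.contDiffAt hx).of_le (by norm_num))
  have hP : 0 < ‖gradient u x‖ := norm_pos_iff.2 hgrad
  have hv : 0 < c - u x := sub_pos.2 hux
  have hweight : ∑ i, (ε * inner ℝ (x - p) (e i)) ^ 2 ≤ (ε * d) ^ 2 := by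
    simp only [mul_pow, ← Finset.mul_sum, e.sum_sq_inner_left]
    rw [dist_eq_norm] at hxp
    gcongr
  exact (hu.criticalSystem hΓ hf hx hux hgrad hmax he).le_ratioBound hα hε (by positivity) hv hN₁
    hD₁ hD₂ hεd hweight (hD x hx) (hN _ (hu.admissible x hx) (hu.eq_one x hx))

theorem rpow_mul_norm_gradient_le_of_isLocalMax (hu : IsAdmissibleSolution Γ f Ω u)
    (hΓ : IsConvexInvariantCone Γ) (hf : IsConcaveEllipticHessianOp Γ f)
    (hN : ConditionN Γ f N₁ N₂) (hD : ConditionD f u Ω D₁ D₂) (hα : 0 < α) (hε : 0 < ε)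
    (hN₁ : 0 < N₁) (hN₂ : N₂ ≤ 2 * α + 1) (hD₁ : 0 < D₁) (hD₂ : 0 < D₂)
    (hεd : 2 * (9 + 4 / α) * ε * d ^ 2 ≤ 1)
    (hx : x ∈ Ω) (hxp : dist x p ≤ d) (hux : u x < c) (huM : c - u x ≤ M)
    (hgrad : gradient u x ≠ 0) (hmax : IsLocalMax (weightedGradient α ε c p u) x) :
    (c - u x) ^ α * ‖gradient u x‖ ≤
      √(M ^ (2 * α + 1) * ratioBound α ε d N₁ N₂ D₁ D₂ M) := by
  have hv : 0 < c - u x := sub_pos.2 hux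
  refine Real.le_sqrt_of_sq_le ?_
  calc ((c - u x) ^ α * ‖gradient u x‖) ^ 2
      = (c - u x) ^ (2 * α + 1) * (‖gradient u x‖ ^ 2 / (c - u x)) := by
        rw [Real.rpow_add_one hv.ne', mul_comm 2 α, Real.rpow_mul hv.le, Real.rpow_two]
        field_simp
    _ ≤ (c - u x) ^ (2 * α + 1) * ratioBound α ε d N₁ N₂ D₁ D₂ (c - u x) := by
        gcongr
        exact hu.sq_norm_gradient_div_le_ratioBound hΓ hf hN hD hα hε hN₁ hD₁ hD₂ hεd hx hxp hux
          hgrad hmax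
    _ ≤ M ^ (2 * α + 1) * ratioBound α ε d N₁ N₂ D₁ D₂ M :=
        rpow_mul_ratioBound_le (by positivity) hN₂ hα hε hN₁ hD₁ hD₂ hv huM

theorem sub_rpow_mul_norm_gradient_le (hu : IsAdmissibleSolution Γ f Ω u)
    (hΓ : IsConvexInvariantCone Γ) (hf : IsConcaveEllipticHessianOp Γ f)
    (hN : ConditionN Γ f N₁ N₂) (hD : ConditionD f u Ω D₁ D₂) (hα : 0 < α) (hε : 0 < ε)
    (hN₁ : 0 < N₁) (hN₂ : N₂ ≤ 2 * α + 1) (hD₁ : 0 < D₁) (hD₂ : 0 < D₂)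
    (hεd : 2 * (9 + 4 / α) * ε * d ^ 2 ≤ 1) (hΩ : Bornology.IsBounded Ω)
    (hdiam : Metric.diam Ω ≤ d) (hcont : ContinuousOn u (closure Ω))
    (hbdry : ∀ y ∈ frontier Ω, c < u y) (hM : ∀ y ∈ Ω, c - u y ≤ M) (hx : x ∈ Ω) (hux : u x < c) :
    (c - u x) ^ α * ‖gradient u x‖ ≤
      √(M ^ (2 * α + 1) * ratioBound α ε d N₁ N₂ D₁ D₂ M) * Real.exp (ε / 2 * d ^ 2) := by
  by_cases hgrad : gradient u x = 0
  · rw [hgrad, norm_zero, mul_zero]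
    positivity
  obtain ⟨z, hz, huz, hzgrad, hmax, hle⟩ := exists_isLocalMax_weightedGradient (ε := ε) (p := x) hα
    hu.isOpen hΩ (hu.contDiffOn.of_le (by norm_num)) hcont hbdry hx hux hgrad
  have hzx : dist z x ≤ d := (Metric.dist_le_diam_of_mem hΩ hz hx).trans hdiam
  calc (c - u x) ^ α * ‖gradient u x‖ = weightedGradient α ε c x u x := by simp [weightedGradient]
    _ ≤ (c - u z) ^ α * ‖gradient u z‖ * Real.exp (ε / 2 * ‖z - x‖ ^ 2) := hle
    _ ≤ _ := by
      rw [← dist_eq_norm]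
      gcongr
      exact hu.rpow_mul_norm_gradient_le_of_isLocalMax hΓ hf hN hD hα hε hN₁ hN₂ hD₁ hD₂ hεd hz hzx
        huz (hM z hz) hzgrad hmax

end IsAdmissibleSolution

end GradientEstimate

theorem c1_estimate_general {α N₁ N₂ D₁ D₂ M d : ℝ} (hα : 0 < α) (hN₁ : 0 < N₁)
    (hN₂ : N₂ ≤ 2 * α + 1) (hD₁ : 0 < D₁) (hD₂ : 0 < D₂) (hd : 0 < d) :
    ∃ C : ℝ, 0 < C ∧ ∀ {n : ℕ} {Γ : Set (Fin n → ℝ)} {f : (Fin n → ℝ) → ℝ}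
      {Ω : Set (EuclideanSpace ℝ (Fin n))} {u : EuclideanSpace ℝ (Fin n) → ℝ},
      IsAdmissibleSolution Γ f Ω u → IsConvexInvariantCone Γ → IsConcaveEllipticHessianOp Γ f →
      ConditionN Γ f N₁ N₂ → ConditionD f u Ω D₁ D₂ → Bornology.IsBounded Ω →
      Metric.diam Ω ≤ d → ContinuousOn u (closure Ω) → (∀ x ∈ Ω, -M ≤ u x) →
      (∀ x ∈ frontier Ω, u x = 0) → ∀ x ∈ Ω, (-u x) ^ α * ‖gradient u x‖ ≤ C := by
  set ε : ℝ := 1 / (2 * (9 + 4 / α) * d ^ 2) with hε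
  have hεpos : 0 < ε := by positivity
  have hεd : 2 * (9 + 4 / α) * ε * d ^ 2 ≤ 1 := by rw [hε]; field_simp; exact le_rfl
  refine ⟨√(M ^ (2 * α + 1) * ratioBound α ε d N₁ N₂ D₁ D₂ M) * Real.exp (ε / 2 * d ^ 2) + 1,
    by positivity, ?_⟩
  intro n Γ f Ω u hu hΓ hf hN hD hΩ hdiam hcont hM hbdry x hx
  have hneg : u x < 0 := hu.lt_zero hΓ hf hΩ hcont (fun y hy ↦ (hbdry y hy).le) hx
  have htendsto : Tendsto (fun c ↦ (c - u x) ^ α * ‖gradient u x‖) (𝓝[<] 0)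
      (𝓝 ((-u x) ^ α * ‖gradient u x‖)) := by
    have hcontinuous : Continuous fun c : ℝ ↦ (c - u x) ^ α * ‖gradient u x‖ :=
      ((continuous_id.sub continuous_const).rpow_const fun _ ↦ Or.inr hα.le).mul continuous_const
    simpa using (hcontinuous.tendsto 0).mono_left nhdsWithin_le_nhds
  refine (le_of_tendsto htendsto ?_).trans (le_add_of_nonneg_right zero_le_one)
  filter_upwards [Ioo_mem_nhdsLT hneg] with c hc
  exact hu.sub_rpow_mul_norm_gradient_le hΓ hf hN hD hα hεpos hN₁ hN₂ hD₁ hD₂ hεd hΩ hdiam hcont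
    (fun y hy ↦ by rw [hbdry y hy]; exact hc.2) (fun y hy ↦ by linarith [hM y hy, hc.2]) hx hc.1

/-- **Proposition (`C¹` estimate).** For a concave elliptic Hessian operator satisfying
condition N with constants `N₁, N₂` and a solution `u` of `F(D²u) = 1` in `Ω`, `u = 0` on
`∂Ω`, satisfying condition D with constants `D₁, D₂`, one has
`sup_Ω ((−u)^α |Du|) ≤ C` with `α, C` depending only on `‖u‖_{C⁰(Ω)}`, `N₁, N₂, D₁, D₂`
and `diam(Ω)`. -/
theorem c1_estimate (n : ℕ) (hn : 2 ≤ n)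
    (N₁ N₂ : ℝ) (hN₁ : 0 < N₁) (hN₂ : 0 < N₂)
    (D₁ D₂ : ℝ) (hD₁ : 0 < D₁) (hD₂ : 0 < D₂)
    (M : ℝ) (hM : 0 < M) (d : ℝ) (hd : 0 < d) :
    ∃ α C : ℝ, 0 < α ∧ 0 < C ∧
      ∀ (Γ : Set (Fin n → ℝ)) (f : (Fin n → ℝ) → ℝ),
        IsConvexInvariantCone Γ → IsConcaveEllipticHessianOp Γ f → ConditionN Γ f N₁ N₂ →
        ∀ (Ω : Set (EuclideanSpace ℝ (Fin n))) (u : EuclideanSpace ℝ (Fin n) → ℝ),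
          IsOpen Ω → IsConnected Ω → Bornology.IsBounded Ω → Metric.diam Ω ≤ d →
          ContDiffOn ℝ (⊤ : ℕ∞) u Ω → ContinuousOn u (closure Ω) →
          (∀ x ∈ closure Ω, |u x| ≤ M) →
          (∀ x ∈ Ω, hessEigen u x ∈ Γ) →
          (∀ x ∈ Ω, f (hessEigen u x) = 1) →
          (∀ x ∈ frontier Ω, u x = 0) →
          ConditionD f u Ω D₁ D₂ →
          ∀ x ∈ Ω, (-u x) ^ α * ‖gradient u x‖ ≤ C := by
  obtain ⟨C, hC, hest⟩ := c1_estimate_general (M := M) hN₂ hN₁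
    (show N₂ ≤ 2 * N₂ + 1 by linarith) hD₁ hD₂ hd
  exact ⟨N₂, C, hN₂, hC, fun Γ f hΓ hf hN Ω u hopen _ hΩ hdiam hu hcont hM hadm heq hbdry hD ↦
    hest ⟨hopen, hu.of_le (WithTop.coe_le_coe.2 le_top), hadm, heq⟩ hΓ hf hN hD hΩ hdiam hcont
      (fun x hx ↦ neg_le_of_abs_le (hM x (subset_closure hx))) hbdry⟩
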